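/- arXiv:1903.07514 — 2 statements merged into one kernel-verified Lean document; each statement's English description precedes it below -/
import Mathlib

section
/- Let A be a commutative Noetherian ring, p ⊊ q prime ideals with dim (A_q / p A_q) = 1, M a finitely generated A-module, and n an integer. If Ext^n_{A_p}(κ(p), M_p) ≠ 0 then Ext^{n+1}_{A_q}(κ(q), M_q) ≠ 0. In other words, nonvanishing of the n-th Bass number μ^n(p, M) implies nonvanishing of μ^{n+1}(q, M). -/
open CategoryTheory

/-- The `n`-th Ext group of `M` and `N` over `R`. -/
noncomputable def extModule (R : Type) [CommRing R] (M N : ModuleCat R) (n : ℕ) :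
    ModuleCat R :=
  ((Ext R (ModuleCat R) n).obj (Opposite.op M)).obj N

/-!
Every Ext group below is compared with a localization of `Ext^n_R(R/p, M)`. For a finite module
over a Noetherian ring, Ext commutes with localization, so `Ext^n(κ(p), M_p)` is the localization
at `p`, and `Ext^n(R_q/pR_q, M_q)` the localization at `q`; nonvanishing of the former forces
nonvanishing of the latter because `q.primeCompl ≤ p.primeCompl`.

In the local ring `R_q` write `P` for the image of `p` and choose `x` in the maximal ideal outside
`P`. The only prime above `P + (x)` is the maximal ideal, so if `Ext^{n+1}(κ, M_q) = 0`, then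
dévissage gives `Ext^{n+1}(R_q/(P + (x)), M_q) = 0`. By the long exact sequence of multiplication
by the regular element `x`, the finite module `Ext^n(R_q/P, M_q)` equals `x` times itself, and it
vanishes by Nakayama.
-/

open Abelian IsLocalRing Opposite Pointwise

universe w v u

section AbelianCategory

variable {C : Type*} [Category* C] [Abelian C] [HasExt.{w} C]

lemma nontrivial_ext_congr {X X' Y Y' : C} (e : X ≅ X') (f : Y ≅ Y') (n : ℕ) :
    Nontrivial (Ext.{w} X Y n) ↔ Nontrivial (Ext.{w} X' Y' n) :=
  (((extFunctor n).mapIso e.symm.op).app Y ≪≫ ((extFunctor n).obj (op X')).mapIso f)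
    |>.addCommGroupIsoToAddEquiv.toEquiv.nontrivial_congr

lemma subsingleton_ext_X₂ {S : ShortComplex C} (hS : S.ShortExact) (Y : C) (n : ℕ)
    [Subsingleton (Ext.{w} S.X₁ Y n)] [Subsingleton (Ext.{w} S.X₃ Y n)] :
    Subsingleton (Ext.{w} S.X₂ Y n) := by
  refine subsingleton_of_forall_eq 0 fun a => ?_
  obtain ⟨b, rfl⟩ := Ext.contravariant_sequence_exact₂ hS Y a (Subsingleton.elim _ _)
  rw [Subsingleton.elim b 0, Ext.comp_zero]

section Functor

variable {D : Type*} [Category* D] [Abelian D] [HasExt.{v} D]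
  (F : C ⥤ D) [F.Additive] [Limits.PreservesFiniteLimits F] [Limits.PreservesFiniteColimits F]

lemma mapExactFunctor_extClass_comp {T : ShortComplex C} (hT : T.ShortExact) {Y : C} {n m : ℕ}
    (a : Ext.{w} T.X₁ Y n) (h : 1 + n = m) :
    (hT.extClass.comp a h).mapExactFunctor F =
      (hT.map_of_exact F).extClass.comp (a.mapExactFunctor F) h := by
  rw [Ext.mapExactFunctor_comp _ _ _ h, Ext.mapExactFunctor_extClass]
  rfl

lemma exists_mk₀_comp_eq_mapExactFunctor {T : ShortComplex C} (hT : T.ShortExact) {Y : C} {n : ℕ}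
    (a : Ext.{w} T.X₁ Y n)
    (ha : (hT.extClass.comp a (add_comm 1 n)).mapExactFunctor F = (0 : Ext.{v} _ _ _)) :
    ∃ b : Ext.{v} (F.obj T.X₂) (F.obj Y) n,
      (Ext.mk₀ (F.map T.f)).comp b (zero_add n) = a.mapExactFunctor F :=
  Ext.contravariant_sequence_exact₁ (hT.map_of_exact F) _ _ (add_comm 1 n)
    ((mapExactFunctor_extClass_comp F hT a (add_comm 1 n)).symm.trans ha)

end Functor

variable {X Y : C} (P : ProjectiveResolution X)

lemma extMk_degree_zero_eq_zero_iff (f : P.complex.X 0 ⟶ Y) (hf : P.complex.d 1 0 ≫ f = 0) :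
    P.extMk f 1 rfl hf = 0 ↔ f = 0 := by
  have h : Limits.IsZero (P.cochainComplex.X 1) :=
    P.cochainComplex.isZero_of_isStrictlyLE 0 1 (by simp)
  rw [← P.extEquivCohomologyClass.apply_eq_iff_eq,
    P.extEquivCohomologyClass_extMk, P.extEquivCohomologyClass_zero,
    CochainComplex.HomComplex.CohomologyClass.mk_eq_zero_iff,
    CochainComplex.HomComplex.Cocycle.toSingleMk_mem_coboundaries_iff _ _ _ _ _ 1 (by simp)]
  constructor
  · rintro ⟨g, hg⟩
    rw [h.eq_of_src g 0, Limits.comp_zero] at hg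
    exact (cancel_epi (P.cochainComplexXIso (-(0 : ℕ)) 0 rfl).hom).1 (by simpa using hg.symm)
  · rintro rfl
    exact ⟨0, by simp⟩

lemma extMk_eq_zero_iff_exists_d_next_comp {n m : ℕ} (hm : n + 1 = m) (f : P.complex.X n ⟶ Y)
    (hf : P.complex.d m n ≫ f = 0) :
    P.extMk f m hm hf = 0 ↔
      ∃ g : P.complex.X ((ComplexShape.down ℕ).next n) ⟶ Y, P.complex.d n _ ≫ g = f := by
  subst hm
  cases n with
  | zero => simpa [eq_comm] using! extMk_degree_zero_eq_zero_iff P f hf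
  | succ n =>
    rw [P.extMk_eq_zero_iff f _ _ hf n rfl, ChainComplex.next_nat_succ]

lemma exactAt_linearYonedaObj_iff (R : Type*) [Ring R] [Linear R C] (n : ℕ) :
    (P.complex.linearYonedaObj R Y).ExactAt n ↔ Subsingleton (Ext.{w} X Y n) := by
  rw [HomologicalComplex.exactAt_iff' _ _ n (n + 1) rfl (by simp),
    ShortComplex.moduleCat_exact_iff]
  constructor
  · intro h
    refine subsingleton_of_forall_eq 0 fun a => ?_
    obtain ⟨f, hf, rfl⟩ := P.extMk_surjective a (n + 1) rfl
    exact (extMk_eq_zero_iff_exists_d_next_comp P rfl f hf).2 (h f hf)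
  · intro h f hf
    exact (extMk_eq_zero_iff_exists_d_next_comp P rfl f hf).1 (Subsingleton.elim _ _)

lemma subsingleton_leftDerived_ext_iff (R : Type*) [Ring R] [Linear R C] [EnoughProjectives C]
    (X Y : C) (n : ℕ) :
    Subsingleton (((_root_.Ext R C n).obj (op X)).obj Y) ↔ Subsingleton (Ext.{w} X Y n) := by
  have P : ProjectiveResolution X := ProjectiveResolution.of X
  rw [(P.isoExt n Y).toLinearEquiv.toEquiv.subsingleton_congr,
    ← ModuleCat.isZero_iff_subsingleton, ← HomologicalComplex.exactAt_iff_isZero_homology,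
    exactAt_linearYonedaObj_iff P]

end AbelianCategory

lemma nontrivial_extModule_iff (R : Type) [CommRing R] (M N : ModuleCat R) (n : ℕ) :
    Nontrivial (extModule R M N n) ↔ Nontrivial (Ext M N n) := by
  rw [← not_subsingleton_iff_nontrivial, ← not_subsingleton_iff_nontrivial]
  exact (subsingleton_leftDerived_ext_iff R M N n).not

section Localization

open ModuleCat (localizedModuleFunctor)

variable {R : Type u} [CommRing R] (S : Submonoid R)

lemma localizedModuleFunctor_map_smul {M N : ModuleCat.{u} R} (r : R) (f : M ⟶ N) :
    (localizedModuleFunctor S).map (r • f) =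
      algebraMap R (Localization S) r • (localizedModuleFunctor S).map f := by
  ext (x : M.localizedModule S)
  exact LinearMap.congr_fun ((map_smul (IsLocalizedModule.mapExtendScalars S
    (M.localizedModuleMkLinearMap S) (N.localizedModuleMkLinearMap S) (Localization S)) r
    f.hom).trans (algebraMap_smul _ r _).symm) x

lemma mapExactFunctor_localizedModuleFunctor_smul {M N : ModuleCat.{u} R} {n : ℕ} (r : R)
    (a : Ext M N n) :
    (r • a).mapExactFunctor (localizedModuleFunctor S) =
      algebraMap R (Localization S) r • a.mapExactFunctor (localizedModuleFunctor S) := by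
  rw [Ext.smul_eq_comp_mk₀, Ext.mapExactFunctor_comp, Ext.mapExactFunctor_mk₀,
    localizedModuleFunctor_map_smul, CategoryTheory.Functor.map_id, ← Ext.smul_eq_comp_mk₀]

/-- The comparison of `ModuleCat.localizedModuleFunctor`, whose values are shrunk quotients, with an
arbitrary localization `f : M → M'` of the module `M`. -/
noncomputable def localizedModuleIso {M : ModuleCat.{u} R} {M' : Type u}
    [AddCommGroup M'] [Module R M'] [Module (Localization S) M']
    [IsScalarTower R (Localization S) M'] (f : M →ₗ[R] M') [IsLocalizedModule S f] :
    (localizedModuleFunctor S).obj M ≅ ModuleCat.of (Localization S) M' :=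
  ((IsLocalizedModule.linearEquiv S (M.localizedModuleMkLinearMap S)
    f).extendScalarsOfIsLocalization S (Localization S)).toModuleIso

/-- The isomorphism `S⁻¹(R/I) ≅ S⁻¹R/I S⁻¹R`, which presents localized cyclic modules as quotients
of the localized ring. -/
noncomputable def localizedQuotientIso (I : Ideal R) :
    (localizedModuleFunctor S).obj (ModuleCat.of R (R ⧸ I)) ≅
      ModuleCat.of (Localization S) (Localization S ⧸ I.map (algebraMap R (Localization S))) :=
  localizedModuleIso S (M := .of R (R ⧸ I))
    (I.toLocalizedQuotient' (Localization S) S (Algebra.linearMap R (Localization S))) ≪≫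
    (Submodule.quotEquivOfEq _ _ (Ideal.localized'_eq_map ..)).toModuleIso

variable [IsNoetherianRing R]

lemma exists_projective_shortExact_of_finite (M : ModuleCat.{u} R) [Module.Finite R M] :
    ∃ T : ShortComplex (ModuleCat.{u} R), T.ShortExact ∧ Module.Finite R T.X₁ ∧
      Module.Finite R T.X₂ ∧ Projective T.X₂ ∧ T.X₃ = M := by
  obtain ⟨P, _, _, _, _, f, hf⟩ := Module.exists_finite_presentation R M
  exact ⟨f.shortComplexKer, LinearMap.shortExact_shortComplexKer hf,
    inferInstanceAs (Module.Finite R (LinearMap.ker f)), inferInstanceAs (Module.Finite R P),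
    inferInstanceAs (Projective (ModuleCat.of R P)), rfl⟩

lemma exists_smul_eq_localizedModuleFunctor_map {M N : ModuleCat.{u} R} [Module.Finite R M]
    (f : M.localizedModule S ⟶ N.localizedModule S) :
    ∃ s : S, ∃ g : M ⟶ N,
      algebraMap R (Localization S) s • f = (localizedModuleFunctor S).map g := by
  have := Module.finitePresentation_of_finite R M
  obtain ⟨⟨g, s⟩, h⟩ := IsLocalizedModule.surj S (IsLocalizedModule.mapExtendScalars S
    (M.localizedModuleMkLinearMap S) (N.localizedModuleMkLinearMap S) (Localization S)) f.hom
  exact ⟨s, ModuleCat.ofHom g, ModuleCat.hom_ext ((algebraMap_smul _ (s : R) f.hom).trans h)⟩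

lemma exists_smul_eq_zero_of_localizedModuleFunctor_map_eq_zero {M N : ModuleCat.{u} R}
    [Module.Finite R M] (f : M ⟶ N) (hf : (localizedModuleFunctor S).map f = 0) :
    ∃ s : S, (s : R) • f = 0 := by
  have := Module.finitePresentation_of_finite R M
  obtain ⟨s, h⟩ := (IsLocalizedModule.eq_zero_iff S (IsLocalizedModule.mapExtendScalars S
    (M.localizedModuleMkLinearMap S) (N.localizedModuleMkLinearMap S) (Localization S))).1
    (congrArg ModuleCat.Hom.hom hf)
  exact ⟨s, ModuleCat.hom_ext h⟩

lemma exists_smul_eq_mapExactFunctor {M N : ModuleCat.{u} R} [Module.Finite R M] {n : ℕ}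
    (a : Ext ((localizedModuleFunctor S).obj M) ((localizedModuleFunctor S).obj N) n) :
    ∃ s : S, ∃ b : Ext M N n,
      algebraMap R (Localization S) s • a = b.mapExactFunctor (localizedModuleFunctor S) := by
  induction n generalizing M with
  | zero =>
    obtain ⟨f, rfl⟩ := Ext.homEquiv₀.symm.surjective a
    obtain ⟨s, g, h⟩ := exists_smul_eq_localizedModuleFunctor_map S f
    refine ⟨s, Ext.mk₀ g, ?_⟩
    rw [Ext.mapExactFunctor_mk₀, ← h]
    exact (Ext.mk₀_smul ..).symm
  | succ n ih =>
    obtain ⟨T, hT, _, _, _, rfl⟩ := exists_projective_shortExact_of_finite M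
    have : Projective (T.map (localizedModuleFunctor S)).X₂ :=
      (localizedModuleFunctor S).projective_obj _
    obtain ⟨a, rfl⟩ := precomp_extClass_surjective_of_projective_X₂ _
      (hT.map_of_exact (localizedModuleFunctor S)) n a
    obtain ⟨s, b, h⟩ := ih a
    refine ⟨s, hT.extClass.comp b (add_comm 1 n), ?_⟩
    rw [mapExactFunctor_extClass_comp, ← h]
    exact (Ext.comp_smul ..).symm

lemma exists_smul_eq_zero_of_mapExactFunctor_eq_zero {M N : ModuleCat.{u} R} [Module.Finite R M]
    {n : ℕ} (b : Ext M N n) (hb : b.mapExactFunctor (localizedModuleFunctor S) = 0) :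
    ∃ s : S, (s : R) • b = 0 := by
  induction n generalizing M with
  | zero =>
    obtain ⟨f, rfl⟩ := Ext.homEquiv₀.symm.surjective b
    rw [Ext.homEquiv₀_symm_apply, Ext.mapExactFunctor_mk₀, Ext.mk₀_eq_zero_iff] at hb
    obtain ⟨s, h⟩ := exists_smul_eq_zero_of_localizedModuleFunctor_map_eq_zero S f hb
    exact ⟨s, by rw [Ext.homEquiv₀_symm_apply, ← Ext.mk₀_smul, h, Ext.mk₀_zero]⟩
  | succ n ih =>
    obtain ⟨T, hT, _, _, _, rfl⟩ := exists_projective_shortExact_of_finite M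
    obtain ⟨c, rfl⟩ := precomp_extClass_surjective_of_projective_X₂ N hT n b
    obtain ⟨d', hd'⟩ := exists_mk₀_comp_eq_mapExactFunctor _ hT c hb
    obtain ⟨s, d, hd⟩ := exists_smul_eq_mapExactFunctor S d'
    have hcd : ((s : R) • c - (Ext.mk₀ T.f).comp d (zero_add n)).mapExactFunctor
        (localizedModuleFunctor S) = 0 := by
      rw [← Functor.mapExtAddHom_apply, map_sub, Functor.mapExtAddHom_apply,
        Functor.mapExtAddHom_apply, mapExactFunctor_localizedModuleFunctor_smul,
        Ext.mapExactFunctor_comp, Ext.mapExactFunctor_mk₀, ← hd, Ext.comp_smul, hd', sub_self]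
    obtain ⟨t, ht⟩ := ih _ hcd
    rw [smul_sub, sub_eq_zero, smul_smul, ← Ext.comp_smul] at ht
    refine ⟨t * s, ?_⟩
    calc ((t * s : S) : R) • hT.extClass.comp c (add_comm 1 n)
      _ = hT.extClass.comp (((t * s : S) : R) • c) (add_comm 1 n) := (Ext.comp_smul ..).symm
      _ = hT.extClass.comp ((Ext.mk₀ T.f).comp ((t : R) • d) (zero_add n)) (add_comm 1 n) := by
        rw [Submonoid.coe_mul, ht]
      _ = 0 := hT.extClass_comp_assoc _

lemma subsingleton_ext_localizedModuleFunctor_iff (M N : ModuleCat.{u} R) [Module.Finite R M]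
    (n : ℕ) :
    Subsingleton (Ext ((localizedModuleFunctor S).obj M) ((localizedModuleFunctor S).obj N) n) ↔
      ∀ b : Ext M N n, ∃ s : S, (s : R) • b = 0 := by
  constructor
  · intro h b
    exact exists_smul_eq_zero_of_mapExactFunctor_eq_zero S b (Subsingleton.elim _ _)
  · intro h
    refine subsingleton_of_forall_eq 0 fun a => ?_
    obtain ⟨s, b, hs⟩ := exists_smul_eq_mapExactFunctor S a
    obtain ⟨t, ht⟩ := h b
    have hts : algebraMap R (Localization S) t • algebraMap R (Localization S) s • a = 0 := by
      rw [hs, ← mapExactFunctor_localizedModuleFunctor_smul, ht, Ext.mapExactFunctor_zero]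
    rwa [(IsLocalization.map_units _ t).smul_eq_zero,
      (IsLocalization.map_units _ s).smul_eq_zero] at hts

variable {S} in
lemma nontrivial_ext_localizedModuleFunctor_of_le {T : Submonoid R} (hST : S ≤ T)
    (M N : ModuleCat.{u} R) [Module.Finite R M] (n : ℕ)
    (h : Nontrivial
      (Ext ((localizedModuleFunctor T).obj M) ((localizedModuleFunctor T).obj N) n)) :
    Nontrivial (Ext ((localizedModuleFunctor S).obj M) ((localizedModuleFunctor S).obj N) n) := by
  rw [← not_subsingleton_iff_nontrivial, subsingleton_ext_localizedModuleFunctor_iff] at h ⊢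
  exact fun hS => h fun b => (hS b).imp' (Submonoid.inclusion hST) fun _ => id

variable {S} in
lemma nontrivial_ext_localization_quotient_of_le {T : Submonoid R} (hST : S ≤ T) (I : Ideal R)
    (M : Type u) [AddCommGroup M] [Module R M] (n : ℕ)
    (h : Nontrivial (Ext (ModuleCat.of (Localization T)
      (Localization T ⧸ I.map (algebraMap R (Localization T))))
      (ModuleCat.of (Localization T) (LocalizedModule T M)) n)) :
    Nontrivial (Ext (ModuleCat.of (Localization S)
      (Localization S ⧸ I.map (algebraMap R (Localization S))))
      (ModuleCat.of (Localization S) (LocalizedModule S M)) n) := by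
  rw [nontrivial_ext_congr (localizedQuotientIso S I).symm
    (localizedModuleIso S (M := .of R M) (LocalizedModule.mkLinearMap S M)).symm]
  rw [nontrivial_ext_congr (localizedQuotientIso T I).symm
    (localizedModuleIso T (M := .of R M) (LocalizedModule.mkLinearMap T M)).symm] at h
  exact nontrivial_ext_localizedModuleFunctor_of_le hST _ _ n h

end Localization

section Devissage

variable {R : Type u} [CommRing R]

lemma sup_span_singleton_le_annihilator_quotSMulTop (I : Ideal R) (x : R) :
    I ⊔ Ideal.span {x} ≤ Module.annihilator R (QuotSMulTop x (R ⧸ I)) := by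
  refine sup_le ?_ ((Ideal.span_singleton_le_iff_mem _).2 ?_)
  · exact (Ideal.annihilator_quotient (I := I)).ge.trans
      (LinearMap.annihilator_le_of_surjective _ (Submodule.mkQ_surjective (x • ⊤)))
  · exact QuotSMulTop.mem_annihilator _ x

lemma eq_maximalIdeal_of_lt [IsLocalRing R] {P Q : Ideal R} [P.IsPrime] [Q.IsPrime]
    [Ring.KrullDimLE 1 (R ⧸ P)] (h : P < Q) : Q = maximalIdeal R := by
  have hQ : RingHom.ker (Ideal.Quotient.mk P) ≤ Q := by rw [Ideal.mk_ker]; exact h.le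
  have : (Q.map (Ideal.Quotient.mk P)).IsPrime :=
    Ideal.map_isPrime_of_surjective Ideal.Quotient.mk_surjective hQ
  have : (Q.map (Ideal.Quotient.mk P)).IsMaximal := by
    refine Ideal.IsPrime.isMaximal_of_ne_bot ‹_› fun hbot => h.not_ge ?_
    rwa [Ideal.map_eq_bot_iff_le_ker, Ideal.mk_ker] at hbot
  have := Ideal.comap_isMaximal_of_surjective _ (Ideal.Quotient.mk_surjective (I := P))
    (K := Q.map (Ideal.Quotient.mk P))
  rw [Ideal.comap_map_of_surjective' _ Ideal.Quotient.mk_surjective, sup_eq_left.2 hQ] at this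
  exact eq_maximalIdeal this

variable [IsNoetherianRing R]

lemma subsingleton_ext_of_forall_prime (N : ModuleCat.{u} R) (n : ℕ)
    (L : Type u) [AddCommGroup L] [Module R L] [hL : Module.Finite R L]
    (h : ∀ P : Ideal R, P.IsPrime → Module.annihilator R L ≤ P →
      Subsingleton (Ext (ModuleCat.of R (R ⧸ P)) N n)) :
    Subsingleton (Ext (ModuleCat.of R L) N n) := by
  induction hL using IsNoetherianRing.induction_on_isQuotientEquivQuotientPrime R with
  | subsingleton L =>
    have hL : Limits.IsZero (ModuleCat.of R L) := ModuleCat.isZero_of_subsingleton _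
    refine subsingleton_of_forall_eq 0 fun a => ?_
    rw [← Ext.mk₀_id_comp a, hL.eq_zero_of_src (𝟙 _), Ext.mk₀_zero, Ext.zero_comp]
  | quotient L P e =>
    rw [e.annihilator_eq, Ideal.annihilator_quotient] at h
    rw [← not_nontrivial_iff_subsingleton, nontrivial_ext_congr e.toModuleIso (Iso.refl N),
      not_nontrivial_iff_subsingleton]
    exact h P.1 P.2 le_rfl
  | exact L₁ L₂ L₃ f g hf hg hfg ih₁ ih₃ =>
    have := ih₁ fun P hP hle =>
      h P hP ((LinearMap.annihilator_le_of_injective f hf).trans hle)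
    have := ih₃ fun P hP hle =>
      h P hP ((LinearMap.annihilator_le_of_surjective g hg).trans hle)
    exact subsingleton_ext_X₂ (ModuleCat.shortComplex_shortExact
      (ModuleCat.shortComplexOfCompEqZero f g hfg.linearMap_comp_eq_zero) hfg hf hg) N n

lemma subsingleton_ext_of_quotSMulTop {x : R} (hx : x ∈ (⊥ : Ideal R).jacobson)
    {M N : ModuleCat.{u} R} [Module.Finite R M] [Module.Finite R N] (hreg : IsSMulRegular M x)
    {n : ℕ} (h : Subsingleton (Ext (ModuleCat.of R (QuotSMulTop x M)) N (n + 1))) :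
    Subsingleton (Ext M N n) := by
  have smul_surjective (a : Ext M N n) : ∃ b : Ext M N n, x • b = a := by
    obtain ⟨(b : Ext M N n), hb⟩ := Ext.contravariant_sequence_exact₁
      hreg.smulShortComplex_shortExact N a (add_comm 1 n) (h.elim _ _)
    refine ⟨b, ?_⟩
    calc x • b
      _ = (Ext.mk₀ (x • 𝟙 M)).comp b (zero_add n) := by
        rw [Ext.mk₀_smul, Ext.smul_comp, Ext.mk₀_id_comp]
      _ = a := ModuleCat.smulShortComplex_f_eq_smul_id M x ▸ hb
  have top_eq_bot : (⊤ : Submodule R (Ext M N n)) = ⊥ := by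
    refine Submodule.eq_bot_of_le_smul_of_le_jacobson_bot (Ideal.span {x}) ⊤ Module.Finite.fg_top
      (fun a _ => ?_) ((Ideal.span_singleton_le_iff_mem _).2 hx)
    obtain ⟨b, rfl⟩ := smul_surjective a
    exact Submodule.smul_mem_smul (Ideal.mem_span_singleton_self x) trivial
  exact (Submodule.subsingleton_iff R).1 (subsingleton_of_bot_eq_top top_eq_bot.symm)

lemma nontrivial_ext_residueField_of_quotient [IsLocalRing R] (P : Ideal R) [P.IsPrime]
    (hP : P ≠ maximalIdeal R) [Ring.KrullDimLE 1 (R ⧸ P)] (N : ModuleCat.{u} R)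
    [Module.Finite R N] (n : ℕ) (h : Nontrivial (Ext (ModuleCat.of R (R ⧸ P)) N n)) :
    Nontrivial (Ext (ModuleCat.of R (ResidueField R)) N (n + 1)) := by
  contrapose! h
  obtain ⟨x, hxm, hxP⟩ :=
    SetLike.exists_of_lt ((le_maximalIdeal ‹P.IsPrime›.ne_top).lt_of_ne hP)
  refine subsingleton_ext_of_quotSMulTop (M := .of R (R ⧸ P))
    (jacobson_eq_maximalIdeal (⊥ : Ideal R) bot_ne_top ▸ hxm)
    ((isSMulRegular_quotient_iff_mem_of_smul_mem P x).2 fun y hy =>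
      (‹P.IsPrime›.mem_or_mem hy).resolve_left hxP) ?_
  refine subsingleton_ext_of_forall_prime N (n + 1) _ fun Q hQ hle => ?_
  have hPxQ := (sup_span_singleton_le_annihilator_quotSMulTop P x).trans hle
  have hPQ : P < Q := (le_sup_left.trans hPxQ).lt_of_ne fun hPQ =>
    hxP (hPQ ▸ hPxQ (Ideal.mem_sup_right (Ideal.mem_span_singleton_self x)))
  rw [eq_maximalIdeal_of_lt hPQ]
  exact h

end Devissage

section BassNumbers

variable {R : Type u} [CommRing R] {p q : Ideal R} [p.IsPrime] [q.IsPrime]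

lemma isPrime_map_localizationAtPrime_of_le (hpq : p ≤ q) :
    (p.map (algebraMap R (Localization.AtPrime q))).IsPrime :=
  IsLocalization.isPrime_of_isPrime_disjoint q.primeCompl _ p ‹_›
    (Set.disjoint_left.2 fun _ hx hxp => hx (hpq hxp))

lemma map_localizationAtPrime_ne_maximalIdeal_of_lt (hpq : p < q) :
    p.map (algebraMap R (Localization.AtPrime q)) ≠ maximalIdeal (Localization.AtPrime q) := by
  intro h
  have hp := IsLocalization.under_map_of_isPrime_disjoint q.primeCompl (Localization.AtPrime q)
    ‹p.IsPrime› (Set.disjoint_left.2 fun _ hx hxp => hx (hpq.le hxp))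
  rw [h, IsLocalization.AtPrime.under_maximalIdeal _ q] at hp
  exact hpq.ne' hp

variable (p) in
/-- The residue field `κ(p)` as the localization `R_p/pR_p` of `R/p`, the form in which
`localizedQuotientIso` produces it. -/
noncomputable def residueFieldAtPrimeIso :
    ModuleCat.of (Localization.AtPrime p) (ResidueField (Localization.AtPrime p)) ≅
      ModuleCat.of (Localization.AtPrime p)
        (Localization.AtPrime p ⧸ p.map (algebraMap R (Localization.AtPrime p))) :=
  (Submodule.quotEquivOfEq _ _ (IsLocalization.AtPrime.map_eq_maximalIdeal p _).symm).toModuleIso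

theorem nontrivial_ext_residueField_succ [IsNoetherianRing R] (hpq : p < q)
    (hdim : Ring.KrullDimLE 1
      (Localization.AtPrime q ⧸ p.map (algebraMap R (Localization.AtPrime q))))
    (M : Type u) [AddCommGroup M] [Module R M] [Module.Finite R M] (n : ℕ)
    (h : Nontrivial (Ext
      (ModuleCat.of (Localization.AtPrime p) (ResidueField (Localization.AtPrime p)))
      (ModuleCat.of (Localization.AtPrime p) (LocalizedModule p.primeCompl M)) n)) :
    Nontrivial (Ext
      (ModuleCat.of (Localization.AtPrime q) (ResidueField (Localization.AtPrime q)))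
      (ModuleCat.of (Localization.AtPrime q) (LocalizedModule q.primeCompl M)) (n + 1)) := by
  have := isPrime_map_localizationAtPrime_of_le hpq.le
  have hle : q.primeCompl ≤ p.primeCompl := fun _ hx hxp => hx (hpq.le hxp)
  have hp := (nontrivial_ext_congr (residueFieldAtPrimeIso p) (Iso.refl _) n).1 h
  have hq := nontrivial_ext_localization_quotient_of_le hle p M n hp
  have hP := map_localizationAtPrime_ne_maximalIdeal_of_lt hpq
  exact nontrivial_ext_residueField_of_quotient _ hP _ n hq

end BassNumbers

/-- The 'one up' lemma for Bass numbers: if `p ⊊ q` are primes with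
`dim(A_q/pA_q) = 1` and `Ext^n_{A_p}(κ(p), M_p) ≠ 0`, then
`Ext^{n+1}_{A_q}(κ(q), M_q) ≠ 0`. -/
theorem stmt9 (A : Type) [CommRing A] [IsNoetherianRing A]
    (p q : Ideal A) [p.IsPrime] [q.IsPrime] (hpq : p < q)
    (hdim : ringKrullDim
      (Localization.AtPrime q ⧸ p.map (algebraMap A (Localization.AtPrime q))) = 1)
    (M : Type) [AddCommGroup M] [Module A M] [Module.Finite A M] (n : ℕ)
    (h : Nontrivial (extModule (Localization.AtPrime p)
      (ModuleCat.of _ (IsLocalRing.ResidueField (Localization.AtPrime p)))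
      (ModuleCat.of _ (LocalizedModule p.primeCompl M)) n)) :
    Nontrivial (extModule (Localization.AtPrime q)
      (ModuleCat.of _ (IsLocalRing.ResidueField (Localization.AtPrime q)))
      (ModuleCat.of _ (LocalizedModule q.primeCompl M)) (n + 1)) := by
  rw [nontrivial_extModule_iff] at h ⊢
  exact nontrivial_ext_residueField_succ hpq ((Ring.krullDimLE_iff ..).2 hdim.le) M n h
end

section
/- Let A be a commutative Noetherian local ring. If injdim_A A < ∞, then dim A = injdim_A A = depth A; in particular a Gorenstein local ring is Cohen–Macaulay. -/
open CategoryTheory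

/-- Injective dimension: the least `n` such that `Ext^i(-, M)` vanishes for all
`i > n`. -/
noncomputable def injDim (R : Type) [CommRing R] (M : ModuleCat R) : ℕ∞ :=
  sInf {n : ℕ∞ | ∀ (N : ModuleCat R) (i : ℕ), n < (i : ℕ∞) →
    Subsingleton (extModule R N M i)}

/-- The depth of a module over a local ring. -/
noncomputable def depth (R : Type) [CommRing R] [IsLocalRing R]
    (M : Type) [AddCommGroup M] [Module R M] : ℕ∞ :=
  sSup {n : ℕ∞ | ∃ rs : List R, (rs.length : ℕ∞) = n ∧
    (∀ x ∈ rs, x ∈ IsLocalRing.maximalIdeal R) ∧ RingTheory.Sequence.IsRegular M rs}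

/-!
Let `k` be the residue field of `A` and `n` its injective dimension. Every finitely generated module
is filtered by quotients `A ⧸ p`, and Nakayama's lemma gives `Ext^n(A ⧸ p, A) = 0` whenever `p` is
not maximal; by Baer's criterion, `Ext^n(k, A) = 0` would therefore lower the injective dimension,
so `Ext^n(k, A) ≠ 0`.

By Rees's theorem regular sequences then have length at most `n`. If `rs` is a longest one, `k`
embeds in `A ⧸ (rs)`, which has projective dimension `|rs|`. As `Ext^n(A ⧸ (rs), A)` surjects onto
`Ext^n(k, A) ≠ 0`, this gives `|rs| = n`.

If a non-maximal prime `p` contained `rs`, then `Ext^i(A ⧸ p, A) = 0` for all `i ≤ n`, which by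
Rees again would produce a regular sequence of length `n + 1`. Hence `A ⧸ (rs)` has dimension zero
and `dim A = n`.
-/

section ExtVanishing

open CategoryTheory.Abelian

universe w v u

variable {C : Type u} [Category.{v} C] [Abelian C] [HasExt.{w} C] {n : ℕ}

lemma subsingleton_ext_of_iso {X X' : C} (e : X ≅ X') {Y : C}
    (h : Subsingleton (Abelian.Ext X' Y n)) : Subsingleton (Abelian.Ext X Y n) := by
  refine subsingleton_of_forall_eq 0 fun a ↦ ?_
  have factor : (Ext.mk₀ e.hom).comp ((Ext.mk₀ e.inv).comp a (zero_add n)) (zero_add n) = a := by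
    simp
  rw [← factor, Subsingleton.elim ((Ext.mk₀ e.inv).comp a (zero_add n)) 0, Ext.comp_zero]

lemma subsingleton_ext_left_X₁_of_shortExact {S : ShortComplex C} (hS : S.ShortExact) {Y : C}
    (h₂ : Subsingleton (Abelian.Ext S.X₂ Y n)) (h₃ : Subsingleton (Abelian.Ext S.X₃ Y (n + 1))) :
    Subsingleton (Abelian.Ext S.X₁ Y n) := by
  refine subsingleton_of_forall_eq 0 fun a ↦ ?_
  obtain ⟨b, rfl⟩ := Ext.contravariant_sequence_exact₁ hS Y a (add_comm 1 n)
    (Subsingleton.elim _ _)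
  rw [Subsingleton.elim b 0, Ext.comp_zero]

lemma subsingleton_ext_left_X₂_of_shortExact {S : ShortComplex C} (hS : S.ShortExact) {Y : C}
    (h₁ : Subsingleton (Abelian.Ext S.X₁ Y n)) (h₃ : Subsingleton (Abelian.Ext S.X₃ Y n)) :
    Subsingleton (Abelian.Ext S.X₂ Y n) := by
  refine subsingleton_of_forall_eq 0 fun a ↦ ?_
  obtain ⟨b, rfl⟩ := Ext.contravariant_sequence_exact₂ hS Y a (Subsingleton.elim _ _)
  rw [Subsingleton.elim b 0, Ext.comp_zero]

lemma subsingleton_ext_right_X₃_of_shortExact {S : ShortComplex C} (hS : S.ShortExact) {X : C}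
    (h₂ : Subsingleton (Abelian.Ext X S.X₂ n)) (h₁ : Subsingleton (Abelian.Ext X S.X₁ (n + 1))) :
    Subsingleton (Abelian.Ext X S.X₃ n) := by
  refine subsingleton_of_forall_eq 0 fun a ↦ ?_
  obtain ⟨b, rfl⟩ := Ext.covariant_sequence_exact₃ X hS a rfl (Subsingleton.elim _ _)
  rw [Subsingleton.elim b 0, Ext.zero_comp]

lemma isZero_extFunctor_succ_iff {R : Type*} [Ring R] [Linear R C] [EnoughProjectives C]
    (X Y : C) (n : ℕ) :
    Limits.IsZero (((_root_.Ext R C (n + 1)).obj (Opposite.op X)).obj Y) ↔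
      Subsingleton (Abelian.Ext X Y (n + 1)) := by
  let P := projectiveResolution X
  rw [(P.isoExt (R := R) (n + 1) Y).isZero_iff,
    ← HomologicalComplex.exactAt_iff_isZero_homology,
    HomologicalComplex.exactAt_iff' _ n (n + 1) (n + 2) (by simp) (by simp),
    ShortComplex.moduleCat_exact_iff]
  constructor
  · intro exact_hom
    refine subsingleton_of_forall_eq 0 fun a ↦ ?_
    obtain ⟨f, hf, rfl⟩ := P.extMk_surjective a (n + 2) rfl
    exact (P.extMk_eq_zero_iff f (n + 2) rfl hf n rfl).2 (exact_hom f hf)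
  · intro _ f hf
    exact (P.extMk_eq_zero_iff f (n + 2) rfl hf n rfl).1 (Subsingleton.elim _ _)

end ExtVanishing

section InjectiveDimension

open CategoryTheory.Abelian

universe u

lemma injective_of_subsingleton_ext_quotient {R : Type u} [Ring R] (M : ModuleCat.{u} R)
    (h : ∀ I : Ideal R, Subsingleton (Abelian.Ext (ModuleCat.of R (R ⧸ I)) M 1)) :
    Injective M := by
  rw [← Module.injective_iff_injective_object, ← Module.Baer.iff_injective]
  intro I g
  have hI : Function.Exact I.subtype I.mkQ := LinearMap.exact_subtype_mkQ I
  let S : ShortComplex (ModuleCat R) :=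
    ModuleCat.shortComplexOfCompEqZero I.subtype I.mkQ hI.linearMap_comp_eq_zero
  have hS : S.ShortExact :=
    ModuleCat.shortComplex_shortExact S hI I.injective_subtype I.mkQ_surjective
  have := h I
  obtain ⟨f, hf⟩ := Ext.contravariant_sequence_exact₁ hS M
    (Ext.mk₀ (ModuleCat.ofHom g : S.X₁ ⟶ M)) rfl (Subsingleton.elim
      (α := Abelian.Ext (ModuleCat.of R (R ⧸ I)) M 1) _ _)
  obtain ⟨f, rfl⟩ := (Ext.mk₀_bijective _ _).2 f
  rw [Ext.mk₀_comp_mk₀, (Ext.mk₀_bijective _ _).1.eq_iff] at hf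
  exact ⟨f.hom, fun x hx ↦ congrArg (fun φ ↦ φ.hom ⟨x, hx⟩) hf⟩

lemma hasInjectiveDimensionLT_of_subsingleton_ext_quotient {R : Type u} [Ring R]
    (M : ModuleCat.{u} R) (n : ℕ)
    (h : ∀ I : Ideal R, Subsingleton (Abelian.Ext (ModuleCat.of R (R ⧸ I)) M n)) :
    HasInjectiveDimensionLT M n := by
  match n with
  | 0 =>
    have hom_subsingleton : Subsingleton (ModuleCat.of R (R ⧸ (⊥ : Ideal R)) ⟶ M) :=
      Ext.homEquiv₀.subsingleton_congr.1 (h ⊥)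
    have : Subsingleton M := subsingleton_of_forall_eq 0 fun m ↦ by
      let f := (⊥ : Ideal R).liftQ (LinearMap.toSpanSingleton R M m) bot_le
      have hf : ModuleCat.ofHom f = 0 := hom_subsingleton.elim _ _
      calc m = f (Submodule.Quotient.mk 1) := (one_smul R m).symm
        _ = 0 := congrArg (fun φ ↦ φ.hom (Submodule.Quotient.mk 1)) hf
    exact (ModuleCat.isZero_of_subsingleton M).hasInjectiveDimensionLT_zero
  | 1 =>
    have := injective_of_subsingleton_ext_quotient M h
    infer_instance
  | n + 2 =>
    let ⟨I, _, f, _⟩ := EnoughInjectives.presentation M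
    let S := ShortComplex.mk f (Limits.cokernel.π f) (Limits.cokernel.condition f)
    have hS : S.ShortExact := { exact := ShortComplex.exact_cokernel f }
    refine (hS.hasInjectiveDimensionLT_X₃_iff n inferInstance).1
      (hasInjectiveDimensionLT_of_subsingleton_ext_quotient _ (n + 1) fun J ↦ ?_)
    exact subsingleton_ext_right_X₃_of_shortExact hS (Ext.subsingleton_of_injective _ _ n) (h J)

lemma injDim_le_natCast_iff {R : Type} [CommRing R] (M : ModuleCat R) (n : ℕ) :
    injDim R M ≤ n ↔ HasInjectiveDimensionLE M n := by
  have subsingleton_iff (N : ModuleCat R) (i : ℕ) : Subsingleton (extModule R N M (i + 1)) ↔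
      Subsingleton (Abelian.Ext N M (i + 1)) :=
    ModuleCat.isZero_iff_subsingleton.symm.trans (isZero_extFunctor_succ_iff N M i)
  constructor
  · intro hn
    have vanishing : injDim R M ∈ {n : ℕ∞ | ∀ (N : ModuleCat R) (i : ℕ), n < i →
      Subsingleton (extModule R N M i)} := csInf_mem ⟨⊤, fun _ _ hi ↦ absurd hi not_top_lt⟩
    have hlt : injDim R M < (n + 1 : ℕ) := hn.trans_lt (Nat.cast_lt.2 n.lt_succ_self)
    exact hasInjectiveDimensionLT_of_enoughProjectives M (n + 1) fun N ↦
      (subsingleton_iff N n).1 (vanishing N (n + 1) hlt)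
  · intro _
    refine sInf_le fun N i hi ↦ ?_
    obtain ⟨j, rfl⟩ := Nat.exists_eq_add_of_lt (Nat.cast_lt.1 hi)
    exact (subsingleton_iff N _).2 (HasInjectiveDimensionLT.subsingleton M (n + 1) _ (by lia) N)

lemma coe_injDim {R : Type} [CommRing R] (M : ModuleCat R) [Nontrivial M] :
    (injDim R M : WithBot ℕ∞) = injectiveDimension M := by
  refine eq_of_forall_ge_iff fun c ↦ ?_
  induction c with
  | bot =>
    simpa [injectiveDimension_eq_bot_iff, ModuleCat.isZero_iff_subsingleton] using
      not_subsingleton M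
  | coe c =>
    induction c with
    | top => simp
    | coe n =>
      rw [WithBot.coe_le_coe]
      exact (injDim_le_natCast_iff M n).trans (injectiveDimension_le_iff M n).symm

end InjectiveDimension

section Noetherian

open CategoryTheory.Abelian RingTheory.Sequence

universe v u

variable {R : Type u} [CommRing R] [IsNoetherianRing R] {n : ℕ}

lemma subsingleton_ext_of_isSMulRegular [Small.{v} R] {N M : ModuleCat.{v} R} [Module.Finite R N]
    [Module.Finite R M] {x : R} (hx : x ∈ (⊥ : Ideal R).jacobson) (hreg : IsSMulRegular N x)
    (h : Subsingleton (Abelian.Ext (ModuleCat.of R (QuotSMulTop x N)) M (n + 1))) :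
    Subsingleton (Abelian.Ext N M n) := by
  have smul_eq (b : Abelian.Ext N M n) : (Ext.mk₀ (x • 𝟙 N)).comp b (zero_add n) = x • b := by
    rw [Ext.mk₀_smul, Ext.smul_comp, Ext.mk₀_id_comp]
  have smul_surjective (a : Abelian.Ext N M n) : ∃ b : Abelian.Ext N M n, x • b = a := by
    obtain ⟨b, hb⟩ := Ext.contravariant_sequence_exact₁ hreg.smulShortComplex_shortExact M a
      (add_comm 1 n) (h.elim (α := Abelian.Ext (ModuleCat.of R (QuotSMulTop x N)) M _) _ _)
    exact ⟨b, (smul_eq b).symm.trans hb⟩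
  by_contra hne
  rw [not_subsingleton_iff_nontrivial] at hne
  refine Submodule.top_ne_pointwise_smul_of_mem_jacobson_annihilator (M := Abelian.Ext N M n)
    (Ideal.jacobson_mono bot_le hx) (top_le_iff.1 fun a _ ↦ ?_).symm
  obtain ⟨b, rfl⟩ := smul_surjective a
  exact Submodule.smul_mem_pointwise_smul b x ⊤ trivial

lemma subsingleton_ext_of_forall_prime_s13 (M : ModuleCat.{u} R)
    (h : ∀ p : PrimeSpectrum R, Subsingleton (Abelian.Ext (ModuleCat.of R (R ⧸ p.1)) M n))
    (N : Type u) [AddCommGroup N] [Module R N] [hN : Module.Finite R N] :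
    Subsingleton (Abelian.Ext (ModuleCat.of R N) M n) := by
  induction hN using IsNoetherianRing.induction_on_isQuotientEquivQuotientPrime R with
  | subsingleton N =>
    refine subsingleton_of_forall_eq 0 fun a ↦ ?_
    have id_eq_zero : 𝟙 (ModuleCat.of R N) = 0 :=
      (Limits.IsZero.iff_id_eq_zero _).1 (ModuleCat.isZero_of_subsingleton _)
    rw [← Ext.mk₀_id_comp a, id_eq_zero, Ext.mk₀_zero, Ext.zero_comp]
  | quotient N p e => exact subsingleton_ext_of_iso e.toModuleIso (h p)
  | exact N₁ N₂ N₃ f g hf hg hfg h₁ h₃ =>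
    exact subsingleton_ext_left_X₂_of_shortExact (S := ModuleCat.shortComplexOfCompEqZero f g
      hfg.linearMap_comp_eq_zero) (ModuleCat.shortComplex_shortExact _ hfg hf hg) h₁ h₃

lemma exists_isRegular_iff_subsingleton_ext_quotient (I : Ideal R) (M : ModuleCat.{u} R)
    [Module.Finite R M] (hI : I • (⊤ : Submodule R M) < ⊤) :
    (∃ rs : List R, rs.length = n ∧ (∀ r ∈ rs, r ∈ I) ∧ IsRegular M rs) ↔
      ∀ i < n, Subsingleton (Abelian.Ext (ModuleCat.of R (R ⧸ I)) M i) := by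
  have supp : Module.support R (R ⧸ I) = PrimeSpectrum.zeroLocus I := by
    rw [Module.support_eq_zeroLocus, Ideal.annihilator_quotient]
  constructor
  · rintro ⟨rs, rfl, hmem, hreg⟩
    exact ModuleCat.subsingleton_ext_of_exists_isRegular I _ supp.subset M hI rs hmem hreg
  · exact ModuleCat.exists_isRegular_of_exists_subsingleton_ext I n M hI _ supp

end Noetherian

section Local

open CategoryTheory.Abelian IsLocalRing RingTheory.Sequence

universe u

variable {R : Type u} [CommRing R] [IsLocalRing R]

lemma smul_top_lt_top_of_le_maximalIdeal {I : Ideal R} (hI : I ≤ maximalIdeal R) (M : Type*)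
    [AddCommGroup M] [Module R M] [Nontrivial M] [Module.Finite R M] :
    I • (⊤ : Submodule R M) < ⊤ :=
  (Submodule.top_ne_ideal_smul_of_le_jacobson_annihilator
    (hI.trans (maximalIdeal_le_jacobson _))).symm.lt_top

variable [IsNoetherianRing R]

lemma exists_isRegular_append_of_subsingleton_linearMap {M : Type*} [AddCommGroup M] [Module R M]
    [Module.Finite R M] {rs : List R} (hmem : ∀ r ∈ rs, r ∈ maximalIdeal R)
    (hreg : IsRegular M rs) (h : Subsingleton ((R ⧸ maximalIdeal R) →ₗ[R]
      M ⧸ (Ideal.ofList rs • ⊤ : Submodule R M))) :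
    ∃ x : R, (∀ r ∈ rs ++ [x], r ∈ maximalIdeal R) ∧ IsRegular M (rs ++ [x]) := by
  obtain ⟨x, hx, hxreg⟩ := IsSMulRegular.subsingleton_linearMap_iff.1 h
  rw [Ideal.annihilator_quotient] at hx
  have := hreg.nontrivial
  have hmem' : ∀ r ∈ rs ++ [x], r ∈ maximalIdeal R := by
    simpa [or_imp, forall_and] using ⟨hmem, hx⟩
  exact ⟨x, hmem', (isRegular_iff_isWeaklyRegular_of_subset_maximalIdeal hmem').2
    ((isWeaklyRegular_append_iff M rs [x]).2
      ⟨hreg.1, (isWeaklyRegular_singleton_iff _ x).2 hxreg⟩)⟩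

variable {n : ℕ} {M : ModuleCat.{u} R} [Module.Finite R M]

lemma subsingleton_ext_quotient_prime_of_ne_maximalIdeal [HasInjectiveDimensionLE M n]
    {p : Ideal R} [p.IsPrime] (hp : p ≠ maximalIdeal R) :
    Subsingleton (Abelian.Ext (ModuleCat.of R (R ⧸ p)) M n) := by
  have not_le : ¬ maximalIdeal R ≤ p := fun hle ↦
    hp (le_antisymm (le_maximalIdeal Ideal.IsPrime.ne_top') hle)
  obtain ⟨x, hx, hxp⟩ := SetLike.not_le_iff_exists.1 not_le
  have hreg : IsSMulRegular (R ⧸ p) x :=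
    (isSMulRegular_algebraMap_iff (R ⧸ p)).1
      (IsSMulRegular.of_ne_zero (mt Ideal.Quotient.eq_zero_iff_mem.1 hxp))
  exact subsingleton_ext_of_isSMulRegular (maximalIdeal_le_jacobson ⊥ hx) hreg
    (HasInjectiveDimensionLT.subsingleton M (n + 1) (n + 1) le_rfl _)

lemma hasInjectiveDimensionLT_of_subsingleton_ext_quotient_maximalIdeal
    [HasInjectiveDimensionLE M n]
    (h : Subsingleton (Abelian.Ext (ModuleCat.of R (R ⧸ maximalIdeal R)) M n)) :
    HasInjectiveDimensionLT M n := by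
  refine hasInjectiveDimensionLT_of_subsingleton_ext_quotient M n fun I ↦
    subsingleton_ext_of_forall_prime_s13 M (fun p ↦ ?_) (R ⧸ I)
  by_cases hp : p.1 = maximalIdeal R
  · rwa [hp]
  · exact subsingleton_ext_quotient_prime_of_ne_maximalIdeal hp

lemma not_subsingleton_ext_of_injectiveDimension_eq (hM : injectiveDimension M = n) :
    ¬ Subsingleton (Abelian.Ext (ModuleCat.of R (R ⧸ maximalIdeal R)) M n) := by
  intro h
  have := (injectiveDimension_le_iff M n).1 hM.le
  exact (injectiveDimension_lt_iff.2
    (hasInjectiveDimensionLT_of_subsingleton_ext_quotient_maximalIdeal h)).ne hM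

lemma length_le_of_injectiveDimension_eq (hM : injectiveDimension M = n) {rs : List R}
    (hmem : ∀ r ∈ rs, r ∈ maximalIdeal R) (hreg : IsRegular M rs) : rs.length ≤ n := by
  by_contra! hlt
  have := hreg.nontrivial
  exact not_subsingleton_ext_of_injectiveDimension_eq hM
    ((exists_isRegular_iff_subsingleton_ext_quotient _ M
      (smul_top_lt_top_of_le_maximalIdeal le_rfl M)).1 ⟨rs, rfl, hmem, hreg⟩ n hlt)

lemma le_projectiveDimension_of_injectiveDimension_eq (hM : injectiveDimension M = n)
    {N : ModuleCat.{u} R} {f : (R ⧸ maximalIdeal R) →ₗ[R] N} (hf : Function.Injective f) :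
    n ≤ projectiveDimension N := by
  rw [projectiveDimension_ge_iff]
  intro hN
  have := (injectiveDimension_le_iff M n).1 hM.le
  let S : ShortComplex (ModuleCat R) := ModuleCat.shortComplexOfCompEqZero f f.range.mkQ
    f.exact_map_mkQ_range.linearMap_comp_eq_zero
  have hS : S.ShortExact := ModuleCat.shortComplex_shortExact S
    f.exact_map_mkQ_range hf (Submodule.mkQ_surjective _)
  exact not_subsingleton_ext_of_injectiveDimension_eq hM (subsingleton_ext_left_X₁_of_shortExact hS
    (HasProjectiveDimensionLT.subsingleton N n n le_rfl M)
    (HasInjectiveDimensionLT.subsingleton M (n + 1) (n + 1) le_rfl _))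

lemma exists_isRegular_nontrivial_linearMap [Nontrivial M]
    (h : ¬ Subsingleton (Abelian.Ext (ModuleCat.of R (R ⧸ maximalIdeal R)) M n)) :
    ∃ rs : List R, (∀ r ∈ rs, r ∈ maximalIdeal R) ∧ IsRegular M rs ∧
      Nontrivial ((R ⧸ maximalIdeal R) →ₗ[R] M ⧸ (Ideal.ofList rs • ⊤ : Submodule R M)) := by
  classical
  have exists_iff {t : ℕ} := exists_isRegular_iff_subsingleton_ext_quotient (n := t) _ M
    (smul_top_lt_top_of_le_maximalIdeal (le_refl (maximalIdeal R)) M)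
  let hex : ∃ t, ¬ Subsingleton (Abelian.Ext (ModuleCat.of R (R ⧸ maximalIdeal R)) M t) := ⟨n, h⟩
  obtain ⟨rs, hlength, hmem, hreg⟩ := exists_iff.2 fun i hi ↦ not_not.1 (Nat.find_min hex hi)
  refine ⟨rs, hmem, hreg, not_subsingleton_iff_nontrivial.1 fun hsub ↦ Nat.find_spec hex ?_⟩
  obtain ⟨x, hmem', hreg'⟩ := exists_isRegular_append_of_subsingleton_linearMap hmem hreg hsub
  exact exists_iff.1 ⟨rs ++ [x], rfl, hmem', hreg'⟩ _ (by simp [hlength])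

lemma exists_isRegular_length_eq (hR : injectiveDimension (ModuleCat.of R R) = n) :
    ∃ rs : List R, rs.length = n ∧ (∀ r ∈ rs, r ∈ maximalIdeal R) ∧ IsRegular R rs := by
  have : Module.Finite R (ModuleCat.of R R) := inferInstanceAs (Module.Finite R R)
  obtain ⟨rs, hmem, hreg, hsocle⟩ := exists_isRegular_nontrivial_linearMap
    (not_subsingleton_ext_of_injectiveDimension_eq hR)
  refine ⟨rs, le_antisymm (length_le_of_injectiveDimension_eq hR hmem hreg) ?_, hmem, hreg⟩
  obtain ⟨f, hf⟩ := exists_ne (0 : (R ⧸ maximalIdeal R) →ₗ[R] R ⧸ (Ideal.ofList rs • ⊤ : Ideal R))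
  have := isSimpleModule_iff_isCoatom.2 (maximalIdeal.isMaximal R).out
  have hn := le_projectiveDimension_of_injectiveDimension_eq hR (N := ModuleCat.of R _)
    ((LinearMap.injective_or_eq_zero f).resolve_right hf)
  have hpd := ModuleCat.projectiveDimension_quotient_eq_add_length_of_isWeaklyRegular
    (ModuleCat.of R R) rs hreg.1 hmem
  have hproj := ModuleCat.projectiveDimension_eq_zero_of_projective (ModuleCat.of R R)
  rw [hproj, zero_add] at hpd
  exact_mod_cast hn.trans hpd.le

lemma eq_maximalIdeal_of_ofList_le (hM : injectiveDimension M = n) {rs : List R}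
    (hlength : rs.length = n) (hreg : IsRegular M rs) {p : Ideal R} [hp : p.IsPrime]
    (hle : Ideal.ofList rs ≤ p) : p = maximalIdeal R := by
  by_contra hne
  have := hreg.nontrivial
  have := (injectiveDimension_le_iff M n).1 hM.le
  have hpm : p ≤ maximalIdeal R := le_maximalIdeal hp.ne_top
  have exists_iff {t : ℕ} := exists_isRegular_iff_subsingleton_ext_quotient (n := t) p M
    (smul_top_lt_top_of_le_maximalIdeal hpm M)
  have ext_lt : ∀ i < n, Subsingleton (Abelian.Ext (ModuleCat.of R (R ⧸ p)) M i) :=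
    exists_iff.1 ⟨rs, hlength, fun r hr ↦ hle (Ideal.subset_span hr), hreg⟩
  obtain ⟨rs', hlength', hmem', hreg'⟩ := (exists_iff (t := n + 1)).2 fun i hi ↦
    (Nat.lt_succ_iff_lt_or_eq.1 hi).elim (ext_lt i) fun h ↦
      h ▸ subsingleton_ext_quotient_prime_of_ne_maximalIdeal hne
  have := length_le_of_injectiveDimension_eq hM (fun r hr ↦ hpm (hmem' r hr)) hreg'
  lia

lemma ringKrullDim_eq_of_injectiveDimension_eq (hR : injectiveDimension (ModuleCat.of R R) = n) :
    ringKrullDim R = n := by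
  have : Module.Finite R (ModuleCat.of R R) := inferInstanceAs (Module.Finite R R)
  obtain ⟨rs, hlength, hmem, hreg⟩ := exists_isRegular_length_eq hR
  have : Nontrivial (R ⧸ Ideal.ofList rs) := Ideal.Quotient.nontrivial_iff.2
    (ne_top_of_le_ne_top Ideal.IsPrime.ne_top' (Ideal.span_le.2 hmem))
  have : Ring.KrullDimLE 0 (R ⧸ Ideal.ofList rs) := by
    rw [Ideal.krullDimLE_zero_quotient_iff_forall_minimalPrimes_isMaximal]
    intro p hp
    have := hp.1.1
    rw [eq_maximalIdeal_of_ofList_le hR hlength hreg hp.1.2]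
    exact maximalIdeal.isMaximal R
  rw [← ringKrullDim_add_length_eq_ringKrullDim_of_isRegular rs hreg,
    ringKrullDimZero_iff_ringKrullDim_eq_zero.1 this, hlength, zero_add]

lemma depth_eq_of_injectiveDimension_eq {A : Type} [CommRing A] [IsNoetherianRing A]
    [IsLocalRing A] {n : ℕ} (hA : injectiveDimension (ModuleCat.of A A) = n) :
    depth A A = n := by
  have : Module.Finite A (ModuleCat.of A A) := inferInstanceAs (Module.Finite A A)
  apply le_antisymm
  · refine sSup_le ?_
    rintro _ ⟨rs, rfl, hmem, hreg⟩
    exact_mod_cast length_le_of_injectiveDimension_eq hA hmem hreg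
  · obtain ⟨rs, hlength, hmem, hreg⟩ := exists_isRegular_length_eq hA
    exact le_sSup ⟨rs, by rw [hlength], hmem, hreg⟩

end Local

/-- A Gorenstein local ring is Cohen–Macaulay:
if `injdim_A A < ∞` then `dim A = injdim_A A = depth A`. -/
theorem stmt13 (A : Type) [CommRing A] [IsNoetherianRing A] [IsLocalRing A]
    (h : injDim A (ModuleCat.of A A) < ⊤) :
    ringKrullDim A = (injDim A (ModuleCat.of A A) : WithBot ℕ∞) ∧
      injDim A (ModuleCat.of A A) = depth A A := by
  obtain ⟨n, hn⟩ := ENat.ne_top_iff_exists.1 h.ne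
  have hdim : injectiveDimension (ModuleCat.of A A) = n := by
    rw [← coe_injDim, ← hn]
    rfl
  rw [← hn]
  exact ⟨ringKrullDim_eq_of_injectiveDimension_eq hdim,
    (depth_eq_of_injectiveDimension_eq hdim).symm⟩
end
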